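/- arXiv:2510.03408 — 3 statements merged into one kernel-verified Lean document; each statement's English description precedes it below -/
import Mathlib

section
/- Let n ≥ 1, α ∈ (0,1), T > 0, let c : ℝⁿ → ℝ be smooth with c(x) ≥ c₀ for some constant c₀ > 0, and let a : ℝⁿ → ℝ be smooth with a ≥ 0. Let u : ℝ × ℝⁿ → ℝ be smooth, suppose there is a compact set K ⊆ ℝⁿ with supp u(t,·) ⊆ K for all t ∈ [0,T], and suppose u satisfies the fractional wave equation ∂_t² u − c(x)² Δu + a(x) ∂_t^α u = 0 on (0,T) × ℝⁿ. Then for every t ∈ [0,T], E(t) = E(0) − 2 ∫₀^t ∫_{ℝⁿ} a(x) c(x)^{−2} ∂_s u(s,x) · ∂_s^α u(s,x) dx ds. -/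
open MeasureTheory Set

/-- Partial derivative `∂f/∂xᵢ` of `f : ℝⁿ → ℝ` at `x`. -/
noncomputable def partialD {n : ℕ} (f : (Fin n → ℝ) → ℝ) (i : Fin n) (x : Fin n → ℝ) : ℝ :=
  deriv (fun s => f (Function.update x i s)) (x i)

/-- Second partial derivative `∂²f/∂xᵢ²` of `f : ℝⁿ → ℝ` at `x`. -/
noncomputable def secondPartial {n : ℕ} (f : (Fin n → ℝ) → ℝ) (i : Fin n) (x : Fin n → ℝ) : ℝ :=
  deriv (fun s => deriv (fun r => f (Function.update x i r)) s) (x i)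

/-- The Laplacian of `f : ℝⁿ → ℝ`, i.e. the sum of the second partial derivatives. -/
noncomputable def laplacian {n : ℕ} (f : (Fin n → ℝ) → ℝ) (x : Fin n → ℝ) : ℝ :=
  ∑ i, secondPartial f i x

/-- The Caputo fractional derivative of order `α`:
`∂_t^α f(t) = (1/Γ(1-α)) ∫₀^t (t-s)^{-α} f'(s) ds`. -/
noncomputable def caputo (α : ℝ) (f : ℝ → ℝ) (t : ℝ) : ℝ :=
  (1 / Real.Gamma (1 - α)) * ∫ s in (0:ℝ)..t, (t - s) ^ (-α) * deriv f s

/-- The energy `E(t) = ∫ (c⁻² |∂_t u|² + |∇ₓ u|²) dx`. -/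
noncomputable def energy {n : ℕ} (c : (Fin n → ℝ) → ℝ) (u : ℝ → (Fin n → ℝ) → ℝ) (t : ℝ) : ℝ :=
  ∫ x, (((c x) ^ 2)⁻¹ * (deriv (fun s => u s x) t) ^ 2 + ∑ i, (partialD (u t) i x) ^ 2)


/-- directional derivative of `G` -/
noncomputable def DD {n : ℕ} (G : ℝ × (Fin n → ℝ) → ℝ) (v : ℝ × (Fin n → ℝ))
    (p : ℝ × (Fin n → ℝ)) : ℝ := fderiv ℝ G p v

lemma DD_contDiff {n : ℕ} {G : ℝ × (Fin n → ℝ) → ℝ} (hG : ContDiff ℝ (⊤ : ℕ∞) G)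
    (v : ℝ × (Fin n → ℝ)) : ContDiff ℝ (⊤ : ℕ∞) (DD G v) := by
  have h : ContDiff ℝ (⊤ : ℕ∞) (fderiv ℝ G) := hG.fderiv_right (by simp)
  exact h.clm_apply contDiff_const

lemma smooth_diff {n : ℕ} {G : ℝ × (Fin n → ℝ) → ℝ} (hG : ContDiff ℝ (⊤ : ℕ∞) G) :
    Differentiable ℝ G := hG.differentiable (by simp)

lemma DD_time {n : ℕ} {G : ℝ × (Fin n → ℝ) → ℝ} (hG : ContDiff ℝ (⊤ : ℕ∞) G)
    (x : Fin n → ℝ) (s : ℝ) : HasDerivAt (fun r => G (r, x)) (DD G (1, 0) (s, x)) s := by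
  have h1 : HasDerivAt (fun r : ℝ => (r, x)) ((1 : ℝ), (0 : Fin n → ℝ)) s :=
    (hasDerivAt_id s).prodMk (hasDerivAt_const s x)
  exact ((smooth_diff hG) (s, x)).hasFDerivAt.comp_hasDerivAt s h1

lemma DD_space {n : ℕ} {G : ℝ × (Fin n → ℝ) → ℝ} (hG : ContDiff ℝ (⊤ : ℕ∞) G)
    (x : Fin n → ℝ) (s : ℝ) (i : Fin n) (y : ℝ) :
    HasDerivAt (fun r => G (s, Function.update x i r))
      (DD G (0, Pi.single i 1) (s, Function.update x i y)) y := by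
  have h1 : HasDerivAt (fun r : ℝ => (s, Function.update x i r)) ((0 : ℝ), Pi.single i (1 : ℝ)) y :=
    (hasDerivAt_const y s).prodMk (hasDerivAt_update x i y)
  exact ((smooth_diff hG) (s, Function.update x i y)).hasFDerivAt.comp_hasDerivAt y h1

lemma DD_slice {n : ℕ} {G : ℝ × (Fin n → ℝ) → ℝ} (hG : ContDiff ℝ (⊤ : ℕ∞) G)
    (x : Fin n → ℝ) (s : ℝ) (v : Fin n → ℝ) :
    fderiv ℝ (fun y => G (s, y)) x v = DD G (0, v) (s, x) := by
  have h1 : HasFDerivAt (fun y : Fin n → ℝ => (s, y))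
      (ContinuousLinearMap.inr ℝ ℝ (Fin n → ℝ)) x := hasFDerivAt_prodMk_right s x
  have h2 := ((smooth_diff hG) (s, x)).hasFDerivAt.comp x h1
  have h3 : fderiv ℝ (fun y => G (s, y)) x = _ := h2.fderiv
  rw [h3]; simp [DD]

lemma DD_comm {n : ℕ} {G : ℝ × (Fin n → ℝ) → ℝ} (hG : ContDiff ℝ (⊤ : ℕ∞) G)
    (v w : ℝ × (Fin n → ℝ)) : DD (DD G v) w = DD (DD G w) v := by
  funext p
  have hd : DifferentiableAt ℝ (fderiv ℝ G) p :=
    ((hG.fderiv_right (m := (⊤ : ℕ∞)) (by simp)).differentiable (by simp)) p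
  have key : ∀ v w, DD (DD G v) w p = fderiv ℝ (fderiv ℝ G) p w v := by
    intro v w
    have : HasFDerivAt (DD G v) _ p := hd.hasFDerivAt.clm_apply (hasFDerivAt_const v p)
    unfold DD at this ⊢
    rw [this.fderiv]; simp
  rw [key, key]
  have hs : IsSymmSndFDerivAt ℝ G p := hG.contDiffAt.isSymmSndFDerivAt (by simp; norm_cast)
  exact hs.eq w v

lemma DD_zero {n : ℕ} {G : ℝ × (Fin n → ℝ) → ℝ} {K : Set (Fin n → ℝ)} (hK : IsClosed K) {T : ℝ}
    (h : ∀ t ∈ Ioo 0 T, ∀ x ∉ K, G (t, x) = 0) (v : ℝ × (Fin n → ℝ)) :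
    ∀ t ∈ Ioo 0 T, ∀ x ∉ K, DD G v (t, x) = 0 := by
  intro t ht x hx
  have hev : G =ᶠ[nhds (t, x)] fun _ => (0 : ℝ) := by
    filter_upwards [(isOpen_Ioo.prod hK.isOpen_compl).mem_nhds (show (t, x) ∈ Ioo 0 T ×ˢ Kᶜ from ⟨ht, hx⟩)]
      with p hp
    exact h p.1 hp.1 p.2 hp.2
  unfold DD
  rw [hev.fderiv_eq]; simp

lemma zero_Icc {n : ℕ} {G : ℝ × (Fin n → ℝ) → ℝ} {K : Set (Fin n → ℝ)} {T : ℝ} (hT : 0 < T)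
    (hG : Continuous G)
    (h : ∀ t ∈ Ioo 0 T, ∀ x ∉ K, G (t, x) = 0) :
    ∀ t ∈ Icc 0 T, ∀ x ∉ K, G (t, x) = 0 := by
  intro t ht x hx
  have hcl : IsClosed {t : ℝ | G (t, x) = 0} := isClosed_eq (by fun_prop) continuous_const
  have hsub : Ioo 0 T ⊆ {t : ℝ | G (t, x) = 0} := fun t ht => h t ht x hx
  have := closure_minimal hsub hcl
  rw [closure_Ioo hT.ne] at this
  exact this ht

lemma int_slice {n : ℕ} {K : Set (Fin n → ℝ)} (hK : IsCompact K) {f : (Fin n → ℝ) → ℝ}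
    (hf : Continuous f) (h0 : ∀ x ∉ K, f x = 0) : Integrable f :=
  hf.integrable_of_hasCompactSupport (HasCompactSupport.intro hK h0)

lemma swap_int {n : ℕ} {g : ℝ × (Fin n → ℝ) → ℝ} {K : Set (Fin n → ℝ)} (hK : IsCompact K) {t : ℝ}
    (ht : 0 ≤ t) (hg : Continuous g) (h0 : ∀ s ∈ Icc 0 t, ∀ x ∉ K, g (s, x) = 0) :
    ∫ s in (0:ℝ)..t, ∫ x, g (s, x) = ∫ x, ∫ s in (0:ℝ)..t, g (s, x) := by
  apply intervalIntegral_integral_swap (f := fun s x => g (s, x))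
  have h1 : IntegrableOn g (Icc 0 t ×ˢ K) (volume.prod volume) :=
    hg.continuousOn.integrableOn_compact (isCompact_Icc.prod hK)
  have h2 : IntegrableOn g (Icc 0 t ×ˢ univ) (volume.prod volume) := by
    refine h1.of_forall_sdiff_eq_zero (measurableSet_Icc.prod MeasurableSet.univ) ?_
    rintro ⟨s, x⟩ ⟨⟨hs, -⟩, hx⟩
    exact h0 s hs x (fun hxK => hx ⟨hs, hxK⟩)
  have h3 : IntegrableOn g (uIoc 0 t ×ˢ univ) (volume.prod volume) := by
    refine h2.mono_set (prod_mono ?_ subset_rfl)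
    rw [uIoc_of_le ht]; exact Ioc_subset_Icc_self
  rw [IntegrableOn, ← Measure.prod_restrict, Measure.restrict_univ] at h3
  exact h3

/-- Energy identity for the fractionally attenuated wave equation:
`E(t) = E(0) − 2 ∫₀^t ∫ a c⁻² ∂_s u · ∂_s^α u dx ds` for all `t ∈ [0,T]`. -/
theorem energy_identity_fracWave {n : ℕ} (hn : 1 ≤ n) (α T : ℝ) (hα : α ∈ Ioo (0:ℝ) 1)
    (hT : 0 < T) (c a : (Fin n → ℝ) → ℝ) (c₀ : ℝ) (hc₀ : 0 < c₀)
    (hc : ContDiff ℝ (⊤ : ℕ∞) c) (hcge : ∀ x, c₀ ≤ c x)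
    (ha : ContDiff ℝ (⊤ : ℕ∞) a) (hage : ∀ x, 0 ≤ a x)
    (u : ℝ → (Fin n → ℝ) → ℝ)
    (hu : ContDiff ℝ (⊤ : ℕ∞) (fun p : ℝ × (Fin n → ℝ) => u p.1 p.2))
    (K : Set (Fin n → ℝ)) (hK : IsCompact K)
    (hsupp : ∀ t ∈ Icc (0:ℝ) T, Function.support (u t) ⊆ K)
    (hpde : ∀ t ∈ Ioo (0:ℝ) T, ∀ x,
      deriv (fun s => deriv (fun r => u r x) s) t - (c x) ^ 2 * laplacian (u t) x
        + a x * caputo α (fun s => u s x) t = 0) :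
    ∀ t ∈ Icc (0:ℝ) T,
      energy c u t = energy c u 0 -
        2 * ∫ s in (0:ℝ)..t, ∫ x, a x * ((c x) ^ 2)⁻¹ * deriv (fun r => u r x) s *
          caputo α (fun r => u r x) s := by
  intro t ht
  have hKc := hK.isClosed
  have hcpos : ∀ x, (c x) ^ 2 ≠ 0 := fun x => pow_ne_zero 2 (hc₀.trans_le (hcge x)).ne'
  have hcc : Continuous c := hc.continuous
  set U : ℝ × (Fin n → ℝ) → ℝ := fun p => u p.1 p.2 with hU
  set e0 : ℝ × (Fin n → ℝ) := (1, 0) with he0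
  set ei : Fin n → ℝ × (Fin n → ℝ) := fun i => (0, Pi.single i 1) with hei
  have s1 : ∀ v, ContDiff ℝ (⊤ : ℕ∞) (DD U v) := fun v => DD_contDiff hu v
  have s2 : ∀ v w, ContDiff ℝ (⊤ : ℕ∞) (DD (DD U v) w) := fun v w => DD_contDiff (s1 v) w
  have c1 : ∀ v, Continuous (DD U v) := fun v => (s1 v).continuous
  have c2 : ∀ v w, Continuous (DD (DD U v) w) := fun v w => (s2 v w).continuous
  have z0 : ∀ t ∈ Ioo 0 T, ∀ x ∉ K, U (t, x) = 0 := by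
    intro t ht x hx
    by_contra h
    exact hx (hsupp t (Ioo_subset_Icc_self ht) h)
  have z1' := fun v => DD_zero hKc z0 v
  have z1 := fun v => zero_Icc hT (c1 v) (z1' v)
  -- rewriting derivatives
  have d1 : ∀ x s, deriv (fun r => u r x) s = DD U e0 (s, x) := fun x s => (DD_time hu x s).deriv
  have d2 : ∀ x s, deriv (fun s => deriv (fun r => u r x) s) s = DD (DD U e0) e0 (s, x) := by
    intro x s
    simp only [d1]
    exact (DD_time (s1 e0) x s).deriv
  have p1 : ∀ s x i, partialD (u s) i x = DD U (ei i) (s, x) := by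
    intro s x i
    have := (DD_space hu x s i (x i)).deriv
    rw [Function.update_eq_self] at this
    exact this
  have p2 : ∀ s x i, secondPartial (u s) i x = DD (DD U (ei i)) (ei i) (s, x) := by
    intro s x i
    have h1 : ∀ y, deriv (fun r => u s (Function.update x i r)) y
        = DD U (ei i) (s, Function.update x i y) := fun y => (DD_space hu x s i y).deriv
    have := (DD_space (s1 (ei i)) x s i (x i)).deriv
    rw [Function.update_eq_self] at this
    unfold secondPartial
    simp only [h1]
    exact this
  set e : ℝ × (Fin n → ℝ) → ℝ := fun p =>
    ((c p.2) ^ 2)⁻¹ * (DD U e0 p) ^ 2 + ∑ i, (DD U (ei i) p) ^ 2 with he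
  set g : ℝ × (Fin n → ℝ) → ℝ := fun p =>
    ((c p.2) ^ 2)⁻¹ * (2 * DD U e0 p * DD (DD U e0) e0 p)
      + ∑ i, 2 * DD U (ei i) p * DD (DD U e0) (ei i) p with hg
  have hcinv : Continuous fun p : ℝ × (Fin n → ℝ) => ((c p.2) ^ 2)⁻¹ :=
    Continuous.inv₀ (by fun_prop) (fun p => hcpos _)
  have ec : Continuous e := by fun_prop
  have gc : Continuous g := by fun_prop
  have ez : ∀ t ∈ Icc 0 T, ∀ x ∉ K, e (t, x) = 0 := by
    intro t ht x hx
    simp [he, z1 _ t ht x hx]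
  have gz : ∀ t ∈ Icc 0 T, ∀ x ∉ K, g (t, x) = 0 := by
    intro t ht x hx
    simp [hg, z1 _ t ht x hx]
  have hen : ∀ s, energy c u s = ∫ x, e (s, x) := by
    intro s
    simp only [energy, d1, p1, he]
  have hder : ∀ x s, HasDerivAt (fun s => e (s, x)) (g (s, x)) s := by
    intro x s
    have h1 := ((DD_time (s1 e0) x s).pow 2).const_mul ((c x ^ 2)⁻¹)
    have h2 : HasDerivAt (fun s => ∑ i, (DD U (ei i) (s, x)) ^ 2) _ s :=
      HasDerivAt.fun_sum (u := Finset.univ) fun i _ => (DD_time (s1 (ei i)) x s).pow 2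
    have h3 := h1.add h2
    refine h3.congr_deriv ?_
    simp only [hg]
    congr 1
    · simp [he0]
    · refine Finset.sum_congr rfl fun i _ => ?_
      rw [DD_comm hu e0 (ei i)]; simp [he0]
  have hftc : ∀ x, ∫ s in (0:ℝ)..t, g (s, x) = e (t, x) - e (0, x) := by
    intro x
    apply intervalIntegral.integral_eq_sub_of_hasDerivAt (f := fun s => e (s, x))
    · intro s _; exact hder x s
    · exact (gc.comp (by fun_prop : Continuous fun s : ℝ => (s, x))).intervalIntegrable _ _
  have slice : ∀ (f : ℝ × (Fin n → ℝ) → ℝ), Continuous f → ∀ s, (∀ x ∉ K, f (s, x) = 0) →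
      Integrable fun x => f (s, x) := fun f hf s h0 =>
    int_slice hK (hf.comp (by fun_prop : Continuous fun x : Fin n → ℝ => (s, x))) h0
  have main : energy c u t - energy c u 0 = ∫ s in (0:ℝ)..t, ∫ x, g (s, x) := by
    rw [swap_int hK ht.1 gc (fun s hs => gz s ⟨hs.1, hs.2.trans ht.2⟩)]
    simp only [hftc]
    rw [integral_sub (slice e ec t (ez t ht)) (slice e ec 0 (ez 0 ⟨le_rfl, hT.le⟩)), hen, hen]
  have inner : ∀ s ∈ Ioo 0 t, ∫ x, g (s, x) =
      -2 * ∫ x, a x * ((c x) ^ 2)⁻¹ * deriv (fun r => u r x) s *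
          caputo α (fun r => u r x) s := by
    intro s hs
    have hsT : s ∈ Ioo 0 T := ⟨hs.1, hs.2.trans_le ht.2⟩
    have hsT' := Ioo_subset_Icc_self hsT
    have zz := fun v => z1 v s hsT'
    have ibp : ∀ i, ∫ x, 2 * DD U (ei i) (s, x) * DD (DD U e0) (ei i) (s, x)
        = ∫ x, - (2 * DD (DD U (ei i)) (ei i) (s, x) * DD U e0 (s, x)) := by
      intro i
      have hsl : ∀ v, Differentiable ℝ fun x => DD U v (s, x) := fun v =>
        (smooth_diff (s1 v)).comp (by fun_prop : Differentiable ℝ fun x : Fin n → ℝ => (s, x))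
      have := integral_mul_fderiv_eq_neg_fderiv_mul_of_integrable (μ := volume)
        (f := fun x => DD U (ei i) (s, x)) (g := fun x => DD U e0 (s, x))
        (v := Pi.single i (1:ℝ)) ?_ ?_ ?_ (fun x _ => hsl _ x) (fun x _ => hsl _ x)
      · simp only [DD_slice (s1 _)] at this
        rw [integral_neg]
        simp only [mul_assoc]
        rw [integral_const_mul, integral_const_mul, this]
        ring
      · simp only [DD_slice (s1 _)]
        exact slice (fun p => DD (DD U (ei i)) (ei i) p * DD U e0 p) (by fun_prop) s
          (fun x hx => by simp [zz _ x hx])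
      · simp only [DD_slice (s1 _)]
        exact slice (fun p => DD U (ei i) p * DD (DD U e0) (ei i) p) (by fun_prop) s
          (fun x hx => by simp [zz _ x hx])
      · exact slice (fun p => DD U (ei i) p * DD U e0 p) (by fun_prop) s
          (fun x hx => by simp [zz _ x hx])
    have i1 : Integrable fun x => ((c x) ^ 2)⁻¹ * (2 * DD U e0 (s, x) * DD (DD U e0) e0 (s, x)) :=
      slice (fun p => ((c p.2) ^ 2)⁻¹ * (2 * DD U e0 p * DD (DD U e0) e0 p)) (by fun_prop) s
        (fun x hx => by simp [zz _ x hx])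
    have i2 : ∀ i, Integrable fun x => 2 * DD U (ei i) (s, x) * DD (DD U e0) (ei i) (s, x) :=
      fun i => slice (fun p => 2 * DD U (ei i) p * DD (DD U e0) (ei i) p) (by fun_prop) s
        (fun x hx => by simp [zz _ x hx])
    have i3 : ∀ i, Integrable fun x => -(2 * DD (DD U (ei i)) (ei i) (s, x) * DD U e0 (s, x)) :=
      fun i => slice (fun p => -(2 * DD (DD U (ei i)) (ei i) p * DD U e0 p)) (by fun_prop) s
        (fun x hx => by simp [zz _ x hx])
    simp only [hg]
    rw [integral_add i1 (integrable_finsetSum _ fun i _ => i2 i),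
      integral_finsetSum _ fun i _ => i2 i]
    simp only [ibp]
    rw [← integral_finsetSum _ fun i _ => i3 i,
      ← integral_add i1 (integrable_finsetSum _ fun i _ => i3 i), ← integral_const_mul]
    congr 1
    funext x
    have hp := hpde s hsT x
    rw [d2] at hp
    simp only [laplacian, p2] at hp
    have hcap : a x * caputo α (fun s => u s x) s = c x ^ 2 *
      ∑ i, DD (DD U (ei i)) (ei i) (s, x) - DD (DD U e0) e0 (s, x) := by linarith
    rw [d1, show -2 * (a x * ((c x) ^ 2)⁻¹ * DD U e0 (s, x) * caputo α (fun r => u r x) s) =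
      -2 * (((c x) ^ 2)⁻¹ * DD U e0 (s, x) * (a x * caputo α (fun r => u r x) s)) by ring, hcap,
      Finset.sum_neg_distrib, ← Finset.sum_mul, ← Finset.mul_sum]
    have hcx : c x ≠ 0 := (hc₀.trans_le (hcge x)).ne'
    field_simp
    ring
  rw [intervalIntegral.integral_congr_Ioo_of_le ht.1 inner,
    intervalIntegral.integral_const_mul] at main
  linarith
end

section
/- Let n ≥ 1, α ∈ (0,1), T > 0, let c : ℝⁿ → ℝ be smooth with c(x) ≥ c₀ for some constant c₀ > 0, and let a : ℝⁿ → ℝ be smooth with a ≥ 0. Let u : ℝ × ℝⁿ → ℝ be smooth, suppose there is a compact set K ⊆ ℝⁿ with supp u(t,·) ⊆ K for all t ∈ [0,T], and suppose u satisfies the fractional wave equation ∂_t² u − c(x)² Δu + a(x) ∂_t^α u = 0 on (0,T) × ℝⁿ. Then the system is dissipative: E(T) ≤ E(0). -/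
open MeasureTheory Set

lemma expKer_nonneg (v : ℝ → ℝ) (hv : Continuous v) (T l : ℝ) (hT : 0 < T) (hl : 0 < l) :
    0 ≤ ∫ t in (0:ℝ)..T, v t * ∫ s in (0:ℝ)..t, Real.exp (-((t - s) * l)) * v s := by
  set y : ℝ → ℝ := fun t => ∫ s in (0:ℝ)..t, Real.exp (l * s) * v s with hy
  have hyd : ∀ t, HasDerivAt y (Real.exp (l * t) * v t) t := fun t =>
    intervalIntegral.integral_hasDerivAt_right
      ((by fun_prop : Continuous fun s => Real.exp (l * s) * v s).intervalIntegrable _ _)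
      ((by fun_prop : Continuous fun s => Real.exp (l * s) * v s).stronglyMeasurableAtFilter _ _)
      (by fun_prop : Continuous fun s => Real.exp (l * s) * v s).continuousAt
  have hyc : Continuous y := continuous_iff_continuousAt.2 fun t => (hyd t).continuousAt
  set W : ℝ → ℝ := fun t => Real.exp (-(l * t)) * y t with hW
  have hWc : Continuous W := by fun_prop
  have hWd : ∀ t, HasDerivAt W (v t - l * W t) t := by
    intro t
    have h1 : HasDerivAt (fun t => Real.exp (-(l * t))) (Real.exp (-(l * t)) * (-(l * 1))) t :=
      (((hasDerivAt_id t).const_mul l).neg).exp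
    convert! h1.mul (hyd t) using 1
    have : Real.exp (-(l * t)) * Real.exp (l * t) = 1 := by rw [← Real.exp_add]; simp
    simp only [hW]
    linear_combination (-v t) * this
  have hker : ∀ t, ∫ s in (0:ℝ)..t, Real.exp (-((t - s) * l)) * v s = W t := by
    intro t
    simp only [hW, hy]
    rw [← intervalIntegral.integral_const_mul]
    congr 1; ext s
    rw [← mul_assoc, ← Real.exp_add]; congr 2; ring
  simp only [hker]
  have hsq : ∀ t ∈ uIcc 0 T, HasDerivAt (fun t => W t ^ 2 / 2) (v t * W t - l * W t ^ 2) t := by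
    intro t _
    convert! ((hWd t).pow 2).div_const 2 using 1
    simp; ring
  have hI := intervalIntegral.integral_eq_sub_of_hasDerivAt hsq
    ((by fun_prop : Continuous fun t => v t * W t - l * W t ^ 2).intervalIntegrable _ _)
  have hW0 : W 0 = 0 := by simp [hW, hy]
  have hle : ∫ t in (0:ℝ)..T, (v t * W t - l * W t ^ 2) ≤ ∫ t in (0:ℝ)..T, v t * W t := by
    apply intervalIntegral.integral_mono_on hT.le
      ((by fun_prop : Continuous fun t => v t * W t - l * W t ^ 2).intervalIntegrable _ _)
      ((by fun_prop : Continuous fun t => v t * W t).intervalIntegrable _ _)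
    intro t _
    nlinarith [mul_nonneg hl.le (sq_nonneg (W t))]
  refine le_trans ?_ hle
  rw [hI, hW0]
  nlinarith [sq_nonneg (W T)]

lemma ker_unfold (v k : ℝ → ℝ) (T : ℝ) (hT : 0 < T) :
    ∫ t, (Ioc 0 T).indicator v t * ∫ s, (Ioc 0 T).indicator v s * (Ioc 0 T).indicator k (t - s)
      = ∫ t in (0:ℝ)..T, v t * ∫ s in (0:ℝ)..t, k (t - s) * v s := by
  rw [intervalIntegral.integral_of_le hT.le, ← integral_indicator measurableSet_Ioc]
  congr 1; ext t
  by_cases ht : t ∈ Ioc 0 T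
  · rw [indicator_of_mem ht, indicator_of_mem ht]
    congr 1
    rw [intervalIntegral.integral_of_le ht.1.le, integral_Ioc_eq_integral_Ioo,
      ← integral_indicator measurableSet_Ioo]
    congr 1; ext s
    simp only [indicator_apply, mem_Ioc, mem_Ioo] at *
    by_cases hs : 0 < s ∧ s < t
    · rw [if_pos hs, if_pos ⟨hs.1, by linarith⟩, if_pos ⟨by linarith, by linarith⟩, mul_comm]
    · rw [if_neg hs]
      by_cases h0 : 0 < s
      · have : ¬ s < t := fun h => hs ⟨h0, h⟩
        rw [if_neg (c := 0 < t - s ∧ t - s ≤ T) (by intro h; linarith [h.1]), mul_zero]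
      · rw [if_neg (c := 0 < s ∧ s ≤ T) (by intro h; exact h0 h.1), zero_mul]
  · simp [indicator_of_notMem ht]

lemma rpowKer_nonneg (v : ℝ → ℝ) (hv : Continuous v) (T α : ℝ) (hT : 0 < T)
    (h0 : 0 < α) (h1 : α < 1) :
    0 ≤ ∫ t in (0:ℝ)..T, v t * ∫ s in (0:ℝ)..t, (t - s) ^ (-α) * v s := by
  rw [← ker_unfold v (fun r => r ^ (-α)) T hT]
  set w := (Ioc 0 T).indicator v with hw
  set g := (Ioc 0 T).indicator (fun r : ℝ => r ^ (-α)) with hg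
  have hwm : Measurable w := hv.measurable.indicator measurableSet_Ioc
  have hwi : Integrable w := by
    rw [hw, integrable_indicator_iff measurableSet_Ioc]
    exact (hv.integrableOn_Icc (a := 0) (b := T)).mono_set Ioc_subset_Icc_self
  have hgi : Integrable g := by
    rw [hg, integrable_indicator_iff measurableSet_Ioc,
      ← intervalIntegrable_iff_integrableOn_Ioc_of_le hT.le]
    exact intervalIntegral.intervalIntegrable_rpow' (by linarith)
  obtain ⟨C, hC⟩ : ∃ C, ∀ t, ‖w t‖ ≤ C := by
    obtain ⟨C, hC⟩ := (isCompact_Icc (a := (0:ℝ)) (b := T)).exists_bound_of_continuousOn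
      hv.continuousOn
    refine ⟨max C 0, fun t => ?_⟩
    by_cases ht : t ∈ Ioc 0 T
    · rw [hw, indicator_of_mem ht]
      exact (hC t (Ioc_subset_Icc_self ht)).trans (le_max_left _ _)
    · rw [hw, indicator_of_notMem ht]; simp
  have hconv : Integrable (fun p : ℝ × ℝ => w p.2 * g (p.1 - p.2)) (volume.prod volume) :=
    hwi.convolution_integrand (ContinuousLinearMap.mul ℝ ℝ) hgi
  have hH : Integrable (fun p : ℝ × ℝ => w p.1 * (w p.2 * g (p.1 - p.2)))
      (volume.prod volume) :=
    hconv.bdd_mul (c := C) (hwm.comp measurable_fst).aestronglyMeasurable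
      (Filter.Eventually.of_forall fun p => hC _)
  have hΓ : 0 < Real.Gamma α := Real.Gamma_pos_of_pos h0
  set F : (ℝ × ℝ) × ℝ → ℝ := fun q => w q.1.1 * (w q.1.2 *
    (Ioc 0 T).indicator (fun r => q.2 ^ (α - 1) * Real.exp (-(r * q.2))) (q.1.1 - q.1.2)) with hF
  have hker : ∀ r ∈ Ioc 0 T, ∫ l in Ioi (0:ℝ), l ^ (α - 1) * Real.exp (-(r * l))
      = r ^ (-α) * Real.Gamma α := by
    intro r hr
    rw [Real.integral_rpow_mul_exp_neg_mul_Ioi h0 hr.1, one_div, Real.inv_rpow hr.1.le,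
      Real.rpow_neg hr.1.le]
  have hinner : ∀ p : ℝ × ℝ, ∫ l in Ioi (0:ℝ), F (p, l)
      = Real.Gamma α * (w p.1 * (w p.2 * g (p.1 - p.2))) := by
    intro p
    simp only [hF, integral_const_mul]
    by_cases hp : p.1 - p.2 ∈ Ioc 0 T
    · simp only [hg, indicator_of_mem hp, hker _ hp]; ring
    · simp only [hg, indicator_of_notMem hp]; simp
  have hinnerN : ∀ p : ℝ × ℝ, ∫ l in Ioi (0:ℝ), ‖F (p, l)‖
      = ‖Real.Gamma α * (w p.1 * (w p.2 * g (p.1 - p.2)))‖ := by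
    intro p
    simp only [hF, norm_mul, integral_const_mul]
    by_cases hp : p.1 - p.2 ∈ Ioc 0 T
    · simp only [hg, indicator_of_mem hp]
      have : ∫ l in Ioi (0:ℝ), ‖l ^ (α - 1) * Real.exp (-((p.1 - p.2) * l))‖ =
          ∫ l in Ioi (0:ℝ), l ^ (α - 1) * Real.exp (-((p.1 - p.2) * l)) := by
        apply setIntegral_congr_fun measurableSet_Ioi
        intro l hl
        have : 0 ≤ l ^ (α - 1) := Real.rpow_nonneg (le_of_lt hl) _
        simp only
        rw [Real.norm_of_nonneg (by positivity)]
      rw [this, hker _ hp, Real.norm_of_nonneg hΓ.le,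
        Real.norm_of_nonneg (Real.rpow_nonneg hp.1.le _)]
      ring
    · simp only [hg, indicator_of_notMem hp]; simp
  have hFm : Measurable F := by
    have e : F = fun q : (ℝ × ℝ) × ℝ => w q.1.1 * (w q.1.2 *
        ((Ioc 0 T).indicator (fun _ => (1:ℝ)) (q.1.1 - q.1.2) *
          (q.2 ^ (α - 1) * Real.exp (-((q.1.1 - q.1.2) * q.2))))) := by
      ext q
      simp only [hF, indicator_apply]
      split_ifs <;> simp
    rw [e]
    have hi : Measurable ((Ioc 0 T).indicator (fun _ : ℝ => (1:ℝ))) :=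
      measurable_const.indicator measurableSet_Ioc
    fun_prop
  have hFi : Integrable F ((volume.prod volume).prod (volume.restrict (Ioi 0))) := by
    rw [integrable_prod_iff hFm.aestronglyMeasurable]
    constructor
    · refine Filter.Eventually.of_forall fun p => ?_
      simp only [hF]
      refine Integrable.const_mul (Integrable.const_mul ?_ _) _
      by_cases hp : p.1 - p.2 ∈ Ioc 0 T
      · simp only [indicator_of_mem hp]
        refine not_imp_comm.1 integral_undef ?_
        rw [hker _ hp]
        have := Real.rpow_pos_of_pos hp.1 (-α)
        positivity
      · simp only [indicator_of_notMem hp]; simp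
    · simp only [hinnerN]
      exact (hH.const_mul _).norm
  have key : Real.Gamma α * ∫ t, w t * ∫ s, w s * g (t - s)
      = ∫ l in Ioi (0:ℝ), ∫ p : ℝ × ℝ, F (p, l) ∂(volume.prod volume) := by
    rw [← integral_prod_symm _ hFi, integral_prod _ hFi]
    simp only [hinner, integral_const_mul]
    rw [integral_prod _ hH]
    simp only [integral_const_mul]
  have hpos : 0 ≤ ∫ l in Ioi (0:ℝ), ∫ p : ℝ × ℝ, F (p, l) ∂(volume.prod volume) := by
    apply integral_nonneg_of_ae
    filter_upwards [hFi.prod_left_ae, ae_restrict_mem measurableSet_Ioi] with l hl hl0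
    rw [integral_prod _ hl]
    simp only [hF, integral_const_mul]
    rw [ker_unfold v (fun r => l ^ (α - 1) * Real.exp (-(r * l))) T hT]
    simp only [mul_assoc, intervalIntegral.integral_const_mul, Pi.zero_apply]
    simp only [mul_left_comm (v _), intervalIntegral.integral_const_mul]
    exact mul_nonneg (Real.rpow_nonneg (le_of_lt hl0) _) (expKer_nonneg v hv T l hT hl0)
  rw [← key] at hpos
  exact nonneg_of_mul_nonneg_right hpos hΓ
noncomputable def dirD {n : ℕ} (w : ℝ × (Fin n → ℝ)) (U : ℝ × (Fin n → ℝ) → ℝ)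
    (p : ℝ × (Fin n → ℝ)) : ℝ := fderiv ℝ U p w

lemma dirD_smooth {n : ℕ} (w : ℝ × (Fin n → ℝ)) {U : ℝ × (Fin n → ℝ) → ℝ}
    (hU : ContDiff ℝ (⊤ : ℕ∞) U) : ContDiff ℝ (⊤ : ℕ∞) (dirD w U) :=
  (hU.fderiv_right (m := (⊤ : ℕ∞)) (by simp)).clm_apply contDiff_const

lemma dirD_comm {n : ℕ} (w z : ℝ × (Fin n → ℝ)) {U : ℝ × (Fin n → ℝ) → ℝ}
    (hU : ContDiff ℝ (⊤ : ℕ∞) U) (p) : dirD w (dirD z U) p = dirD z (dirD w U) p := by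
  have hd : DifferentiableAt ℝ (fderiv ℝ U) p :=
    ((hU.fderiv_right (m := (⊤ : ℕ∞)) (by simp)).differentiable (by simp)) p
  have key : ∀ w z, dirD w (dirD z U) p = fderiv ℝ (fderiv ℝ U) p w z := by
    intro w z
    have := (hd.hasFDerivAt.clm_apply (hasFDerivAt_const z p)).fderiv
    unfold dirD
    rw [this]; simp
  rw [key, key]
  exact (hU.contDiffAt.isSymmSndFDerivAt (by
    rw [minSmoothness_of_isRCLikeNormedField]
    exact WithTop.coe_le_coe.2 (le_top : (2 : ℕ∞) ≤ ⊤))) w z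

lemma dirD_time {n : ℕ} {U : ℝ × (Fin n → ℝ) → ℝ} (hU : ContDiff ℝ (⊤ : ℕ∞) U) (t x) :
    HasDerivAt (fun s => U (s, x)) (dirD (1, 0) U (t, x)) t :=
  ((hU.differentiable (by simp)) (t, x)).hasFDerivAt.comp_hasDerivAt t
    ((hasDerivAt_id t).prodMk (hasDerivAt_const t x))

lemma dirD_space {n : ℕ} {U : ℝ × (Fin n → ℝ) → ℝ} (hU : ContDiff ℝ (⊤ : ℕ∞) U)
    (t x) (i : Fin n) (s : ℝ) :
    HasDerivAt (fun s => U (t, Function.update x i s))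
      (dirD (0, Pi.single i 1) U (t, Function.update x i s)) s :=
  ((hU.differentiable (by simp)) (t, Function.update x i s)).hasFDerivAt.comp_hasDerivAt s
    ((hasDerivAt_const s t).prodMk (hasDerivAt_update x i s))

lemma dirD_vanish {n : ℕ} (w : ℝ × (Fin n → ℝ)) {U : ℝ × (Fin n → ℝ) → ℝ}
    {S : Set (ℝ × (Fin n → ℝ))} (hS : IsOpen S) (h : ∀ p ∈ S, U p = 0) :
    ∀ p ∈ S, dirD w U p = 0 := by
  intro p hp
  have : U =ᶠ[nhds p] fun _ => 0 := by
    filter_upwards [hS.mem_nhds hp] with q hq using h q hq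
  unfold dirD
  rw [this.fderiv_eq]; simp

lemma vanish_Icc {n : ℕ} {V : ℝ × (Fin n → ℝ) → ℝ} (hV : Continuous V) {T : ℝ} (hT : 0 < T)
    {K : Set (Fin n → ℝ)} (h : ∀ p ∈ Ioo 0 T ×ˢ Kᶜ, V p = 0) :
    ∀ t ∈ Icc 0 T, ∀ x ∉ K, V (t, x) = 0 := by
  intro t ht x hx
  have hcl : IsClosed {t : ℝ | V (t, x) = 0} :=
    isClosed_eq (by fun_prop) continuous_const
  have : closure (Ioo 0 T) ⊆ {t : ℝ | V (t, x) = 0} :=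
    closure_minimal (fun s hs => h (s, x) ⟨hs, hx⟩) hcl
  rw [closure_Ioo hT.ne] at this
  exact this ht

lemma integrable_slice {n : ℕ} {f : (Fin n → ℝ) → ℝ} (hf : Continuous f)
    {K : Set (Fin n → ℝ)} (hK : IsCompact K) (h : ∀ x ∉ K, f x = 0) : Integrable f :=
  hf.integrable_of_hasCompactSupport (HasCompactSupport.intro hK h)

lemma integral_dirD_space {n : ℕ} {G : ℝ × (Fin n → ℝ) → ℝ} (hG : ContDiff ℝ (⊤ : ℕ∞) G)
    {K : Set (Fin n → ℝ)} (hK : IsCompact K) (t : ℝ) (i : Fin n) (h : ∀ x ∉ K, G (t, x) = 0)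
    (h' : ∀ x ∉ K, dirD (0, Pi.single i 1) G (t, x) = 0) :
    ∫ x, dirD (0, Pi.single i 1) G (t, x) = 0 := by
  have hd : ∀ x, HasFDerivAt (fun x => G (t, x))
      ((fderiv ℝ G (t, x)).comp (ContinuousLinearMap.inr ℝ ℝ (Fin n → ℝ))) x := fun x =>
    ((hG.differentiable (by simp)) (t, x)).hasFDerivAt.comp x (hasFDerivAt_prodMk_right t x)
  have hc := (dirD_smooth (0, Pi.single i 1) hG).continuous
  have hi : Integrable fun x => dirD (0, Pi.single i 1) G (t, x) :=
    integrable_slice (by fun_prop) hK h'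
  have hi0 : Integrable fun x => G (t, x) :=
    integrable_slice (by have := hG.continuous; fun_prop) hK h
  have := integral_bilinear_hasLineDerivAt_right_eq_neg_left_of_integrable
    (μ := (volume : Measure (Fin n → ℝ))) (f := fun _ => (1:ℝ)) (f' := fun _ => 0)
    (g := fun x => G (t, x)) (g' := fun x => dirD (0, Pi.single i 1) G (t, x))
    (v := Pi.single i 1) (B := ContinuousLinearMap.mul ℝ ℝ) (by simp) (by simpa using hi)
    (by simpa using hi0) (fun x _ => (hasFDerivAt_const (1:ℝ) x).hasLineDerivAt _)
    (fun x _ => by simpa [dirD] using (hd x).hasLineDerivAt (Pi.single i 1))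
  simpa using this

lemma integrable_slab {n : ℕ} {D : ℝ × (Fin n → ℝ) → ℝ} (hD : Continuous D) {T : ℝ} (hT : 0 < T)
    {K : Set (Fin n → ℝ)} (hK : IsCompact K) (h : ∀ t ∈ Icc 0 T, ∀ x ∉ K, D (t, x) = 0) :
    Integrable D ((volume.restrict (uIoc 0 T)).prod volume) := by
  have h1 : IntegrableOn D (Icc 0 T ×ˢ K) (volume.prod volume) :=
    hD.continuousOn.integrableOn_compact (isCompact_Icc.prod hK)
  have h2 : IntegrableOn D (Icc 0 T ×ˢ univ) (volume.prod volume) := by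
    refine h1.of_forall_sdiff_eq_zero (measurableSet_Icc.prod MeasurableSet.univ) ?_
    rintro ⟨t, x⟩ ⟨⟨ht, _⟩, hn⟩
    exact h t ht x fun hx => hn ⟨ht, hx⟩
  have h3 : IntegrableOn D (uIoc 0 T ×ˢ univ) (volume.prod volume) := by
    refine h2.mono_set (prod_mono ?_ subset_rfl)
    rw [uIoc_of_le hT.le]; exact Ioc_subset_Icc_self
  rw [IntegrableOn, ← Measure.prod_restrict, Measure.restrict_univ] at h3
  exact h3

/-- Dissipativity of the fractionally attenuated wave equation: `E(T) ≤ E(0)`. -/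
theorem energy_dissipation_fracWave {n : ℕ} (hn : 1 ≤ n) (α T : ℝ) (hα : α ∈ Ioo (0:ℝ) 1)
    (hT : 0 < T) (c a : (Fin n → ℝ) → ℝ) (c₀ : ℝ) (hc₀ : 0 < c₀)
    (hc : ContDiff ℝ (⊤ : ℕ∞) c) (hcge : ∀ x, c₀ ≤ c x)
    (ha : ContDiff ℝ (⊤ : ℕ∞) a) (hage : ∀ x, 0 ≤ a x)
    (u : ℝ → (Fin n → ℝ) → ℝ)
    (hu : ContDiff ℝ (⊤ : ℕ∞) (fun p : ℝ × (Fin n → ℝ) => u p.1 p.2))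
    (K : Set (Fin n → ℝ)) (hK : IsCompact K)
    (hsupp : ∀ t ∈ Icc (0:ℝ) T, Function.support (u t) ⊆ K)
    (hpde : ∀ t ∈ Ioo (0:ℝ) T, ∀ x,
      deriv (fun s => deriv (fun r => u r x) s) t - (c x) ^ 2 * laplacian (u t) x
        + a x * caputo α (fun s => u s x) t = 0) :
    energy c u T ≤ energy c u 0 := by
  set U : ℝ × (Fin n → ℝ) → ℝ := fun p => u p.1 p.2 with hUdef
  have hcpos : ∀ x, 0 < c x := fun x => hc₀.trans_le (hcge x)
  set ut := dirD (1, 0) U with hut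
  set du : Fin n → ℝ × (Fin n → ℝ) → ℝ := fun i => dirD (0, Pi.single i 1) U with hdu
  have sut : ContDiff ℝ (⊤ : ℕ∞) ut := dirD_smooth _ hu
  have sdu : ∀ i, ContDiff ℝ (⊤ : ℕ∞) (du i) := fun i => dirD_smooth _ hu
  have e_t : ∀ x, deriv (fun s => u s x) = fun t => ut (t, x) := fun x =>
    funext fun t => (dirD_time hu t x).deriv
  have e_tt : ∀ t x, deriv (fun s => deriv (fun r => u r x) s) t = dirD (1, 0) ut (t, x) := by
    intro t x
    rw [e_t x]
    exact (dirD_time sut t x).deriv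
  have e_i : ∀ t i x, partialD (u t) i x = du i (t, x) := by
    intro t i x
    have := (dirD_space hu t x i (x i)).deriv
    rw [Function.update_eq_self] at this
    exact this
  have e_ii : ∀ t i x, secondPartial (u t) i x = dirD (0, Pi.single i 1) (du i) (t, x) := by
    intro t i x
    have h1 : (fun s => deriv (fun r => u t (Function.update x i r)) s)
        = fun s => du i (t, Function.update x i s) :=
      funext fun s => (dirD_space hu t x i s).deriv
    unfold secondPartial
    rw [h1, (dirD_space (sdu i) t x i (x i)).deriv, Function.update_eq_self]
  -- vanishing
  have hopen : IsOpen (Ioo 0 T ×ˢ Kᶜ) := isOpen_Ioo.prod hK.isClosed.isOpen_compl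
  have zU : ∀ p ∈ Ioo 0 T ×ˢ Kᶜ, U p = 0 := by
    rintro ⟨t, x⟩ ⟨ht, hx⟩
    by_contra hne
    exact hx (hsupp t (Ioo_subset_Icc_self ht) hne)
  have zut := dirD_vanish (1, 0) hopen zU
  have zdu : ∀ i, ∀ p ∈ Ioo 0 T ×ˢ Kᶜ, du i p = 0 := fun i => dirD_vanish _ hopen zU
  set e : ℝ × (Fin n → ℝ) → ℝ := fun p => ((c p.2) ^ 2)⁻¹ * ut p ^ 2 + ∑ i, du i p ^ 2 with he
  have cc : Continuous c := hc.continuous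
  have cci : Continuous fun x => ((c x) ^ 2)⁻¹ :=
    (cc.pow 2).inv₀ fun x => pow_ne_zero 2 (hcpos x).ne'
  have cut := sut.continuous
  have cdu := fun i => (sdu i).continuous
  have ce : Continuous e := by
    have : Continuous fun p : ℝ × (Fin n → ℝ) => ((c p.2) ^ 2)⁻¹ := cci.comp continuous_snd
    fun_prop
  have ze := vanish_Icc ce hT (K := K) (by
    intro p hp
    simp only [he]
    rw [show ut p = 0 from zut p hp]
    simp [zdu _ p hp])
  have hE : ∀ t, energy c u t = ∫ x, e (t, x) := by
    intro t
    unfold energy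
    simp only [e_i, e_t, he]
  have ie : ∀ t ∈ Icc 0 T, Integrable fun x => e (t, x) := fun t ht =>
    integrable_slice (by fun_prop) hK (ze t ht)
  -- flux
  set G : Fin n → ℝ × (Fin n → ℝ) → ℝ := fun i p => ut p * du i p with hG
  have sG : ∀ i, ContDiff ℝ (⊤ : ℕ∞) (G i) := fun i => sut.mul (sdu i)
  set D : Fin n → ℝ × (Fin n → ℝ) → ℝ := fun i => dirD (0, Pi.single i 1) (G i) with hD
  have cD : ∀ i, Continuous (D i) := fun i => (dirD_smooth _ (sG i)).continuous
  have zG : ∀ i, ∀ p ∈ Ioo 0 T ×ˢ Kᶜ, G i p = 0 := by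
    intro i p hp
    simp only [hG, zdu i p hp, mul_zero]
  have zD : ∀ i, ∀ p ∈ Ioo 0 T ×ˢ Kᶜ, D i p = 0 := fun i => dirD_vanish _ hopen (zG i)
  have zG' := fun i => vanish_Icc (sG i).continuous hT (zG i)
  have zD' := fun i => vanish_Icc (cD i) hT (zD i)
  have hDval : ∀ i p, D i p = ut p * dirD (0, Pi.single i 1) (du i) p
      + du i p * dirD (1, 0) (du i) p := by
    intro i p
    have h1 := ((sut.differentiable (by simp)) p).hasFDerivAt.mul
      ((sdu i).differentiable (by simp) p).hasFDerivAt
    have h2 : dirD (1, 0) (du i) p = dirD (0, Pi.single i 1) ut p := dirD_comm _ _ hu p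
    rw [h2]
    simp only [hD, hG, dirD]
    erw [h1.fderiv]
    simp
  set Dt : ℝ × (Fin n → ℝ) → ℝ := fun p => ∑ i, D i p with hDt
  have cDt : Continuous Dt := by fun_prop
  have zDt : ∀ t ∈ Icc 0 T, ∀ x ∉ K, Dt (t, x) = 0 := by
    intro t ht x hx
    simp only [hDt]
    exact Finset.sum_eq_zero fun i _ => zD' i t ht x hx
  have iDt := integrable_slab cDt hT hK zDt
  have intDt : ∫ x, (∫ t in (0:ℝ)..T, Dt (t, x)) = 0 := by
    rw [← intervalIntegral_integral_swap (f := fun t x => Dt (t, x)) iDt]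
    rw [intervalIntegral.integral_congr (g := fun _ => 0)]
    · simp
    intro t ht
    rw [uIcc_of_le hT.le] at ht
    simp only [hDt]
    rw [integral_finsetSum]
    · exact Finset.sum_eq_zero fun i _ =>
        integral_dirD_space (sG i) hK t i (zG' i t ht) (zD' i t ht)
    · intro i _
      have := cD i
      exact integrable_slice (by fun_prop) hK (zD' i t ht)
  have iiDt : Integrable fun x => ∫ t in (0:ℝ)..T, Dt (t, x) := by
    have := iDt.integral_prod_right
    simpa only [intervalIntegral.intervalIntegral_eq_integral_uIoc, hT.le, if_true, one_smul]
      using this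
  -- pointwise inequality
  have hpt : ∀ x, e (T, x) - e (0, x) ≤ 2 * ∫ t in (0:ℝ)..T, Dt (t, x) := by
    intro x
    set e' : ℝ → ℝ := fun t => ((c x) ^ 2)⁻¹ * (2 * ut (t, x) * dirD (1, 0) ut (t, x))
      + ∑ i, 2 * du i (t, x) * dirD (1, 0) (du i) (t, x) with he'
    have hde : ∀ t ∈ uIcc 0 T, HasDerivAt (fun t => e (t, x)) (e' t) t := by
      intro t _
      have h1 := ((dirD_time sut t x).pow 2).const_mul ((c x) ^ 2)⁻¹
      have h2 := HasDerivAt.fun_sum (u := Finset.univ)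
        fun i (_ : i ∈ Finset.univ) => (dirD_time (sdu i) t x).pow 2
      convert! h1.add h2 using 1
      simp [he']
    have ce' : Continuous e' := by
      have h1 := (dirD_smooth (1, 0) sut).continuous
      have h2 := fun i => (dirD_smooth (1, 0) (sdu i)).continuous
      fun_prop
    rw [← intervalIntegral.integral_eq_sub_of_hasDerivAt hde (ce'.intervalIntegrable _ _),
      ← intervalIntegral.integral_const_mul, ← sub_nonpos, ← intervalIntegral.integral_sub
        (ce'.intervalIntegrable _ _)
        ((by fun_prop : Continuous fun t => 2 * Dt (t, x)).intervalIntegrable _ _)]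
    have hv : Continuous fun t => ut (t, x) := by fun_prop
    have hQ := rpowKer_nonneg _ hv T α hT hα.1 hα.2
    have hΓ : 0 < Real.Gamma (1 - α) := Real.Gamma_pos_of_pos (by linarith [hα.2])
    have heq : ∫ t in (0:ℝ)..T, (e' t - 2 * Dt (t, x)) = ∫ t in (0:ℝ)..T,
        (-(2 * ((c x) ^ 2)⁻¹ * a x * (1 / Real.Gamma (1 - α)))) *
          (ut (t, x) * ∫ s in (0:ℝ)..t, (t - s) ^ (-α) * ut (s, x)) := by
      rw [intervalIntegral.integral_of_le hT.le, intervalIntegral.integral_of_le hT.le,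
        integral_Ioc_eq_integral_Ioo, integral_Ioc_eq_integral_Ioo]
      apply setIntegral_congr_fun measurableSet_Ioo
      intro t ht
      have hp := hpde t ht x
      rw [e_tt] at hp
      simp only [laplacian, e_ii, caputo, e_t] at hp
      have hDe : Dt (t, x) = ut (t, x) * (∑ i, dirD (0, Pi.single i 1) (du i) (t, x))
          + ∑ i, du i (t, x) * dirD (1, 0) (du i) (t, x) := by
        simp only [hDt, hDval, Finset.sum_add_distrib, Finset.mul_sum]
      have hee : e' t = ((c x) ^ 2)⁻¹ * (2 * ut (t, x) * dirD (1, 0) ut (t, x))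
          + 2 * ∑ i, du i (t, x) * dirD (1, 0) (du i) (t, x) := by
        simp only [he', Finset.mul_sum, mul_assoc]
      simp only
      rw [hDe, hee]
      have hci : ((c x) ^ 2)⁻¹ * (c x) ^ 2 = 1 :=
        inv_mul_cancel₀ (pow_ne_zero 2 (hcpos x).ne')
      linear_combination (2 * ((c x) ^ 2)⁻¹ * ut (t, x)) * hp
        + 2 * ut (t, x) * (∑ i, dirD (0, Pi.single i 1) (du i) (t, x)) * hci
    rw [heq, intervalIntegral.integral_const_mul]
    have hA : 0 ≤ 2 * ((c x) ^ 2)⁻¹ * a x * (1 / Real.Gamma (1 - α)) := by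
      have := hage x
      positivity
    nlinarith [mul_nonneg hA hQ]
  have h0 : (0:ℝ) ∈ Icc 0 T := ⟨le_rfl, hT.le⟩
  have h1 : T ∈ Icc 0 T := ⟨hT.le, le_rfl⟩
  rw [hE, hE, ← sub_nonpos, ← integral_sub (ie T h1) (ie 0 h0)]
  refine (integral_mono ((ie T h1).sub (ie 0 h0)) (iiDt.const_mul 2) hpt).trans ?_
  rw [integral_const_mul, intDt, mul_zero]
end

section
/- Weighted estimate for the fractional integral with a time-decreasing Carleman weight: let α ∈ (0,1), T > 0, τ ≥ 0, let φ : [0,T] → ℝ be continuous and nonincreasing, and let w : [0,T] → ℝ be measurable with ∫₀^T e^{2τφ(t)} |w(t)|² dt < ∞. Then ∫₀^T e^{2τφ(t)} | (1/Γ(1−α)) ∫₀^t (t−s)^{−α} w(s) ds |² dt ≤ (T^{1−α}/Γ(2−α))² · ∫₀^T e^{2τφ(t)} |w(t)|² dt. -/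
open MeasureTheory Set

/-- The fractional integral of order `1 - α`:
`I_{1-α} w (t) = (1/Γ(1-α)) ∫₀^t (t-s)^{-α} w(s) ds`. -/
noncomputable def fracInt (α : ℝ) (w : ℝ → ℝ) (t : ℝ) : ℝ :=
  (1 / Real.Gamma (1 - α)) * ∫ s in (0:ℝ)..t, (t - s) ^ (-α) * w s

noncomputable def fiK (α T : ℝ) : ℝ → ENNReal :=
  (Ioo (0:ℝ) T).indicator (fun x => ENNReal.ofReal (x ^ (-α)))

theorem fiK_meas (α T : ℝ) : Measurable (fiK α T) := by
  unfold fiK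
  exact Measurable.indicator (by fun_prop) measurableSet_Ioo

theorem fiK_int (α T : ℝ) (hα : α ∈ Ioo (0:ℝ) 1) (hT : 0 < T) :
    ∫⁻ x, fiK α T x = ENNReal.ofReal (T ^ (1 - α) / (1 - α)) := by
  unfold fiK
  have h1 : (-1:ℝ) < -α := by linarith [hα.2]
  have hi := intervalIntegral.intervalIntegrable_rpow' (a := 0) (b := T) h1
  rw [lintegral_indicator measurableSet_Ioo, ← ofReal_integral_eq_lintegral_ofReal]
  · rw [← integral_Ioc_eq_integral_Ioo, ← intervalIntegral.integral_of_le hT.le,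
      integral_rpow (Or.inl h1), Real.zero_rpow (by linarith)]
    congr 1
    rw [sub_zero, neg_add_eq_sub]
  · exact ((intervalIntegrable_iff_integrableOn_Ioc_of_le hT.le).1 hi).mono_set Ioo_subset_Ioc_self
  · filter_upwards [ae_restrict_mem measurableSet_Ioo] with x hx
    exact Real.rpow_nonneg hx.1.le _

/-- Cauchy-Schwarz with kernel. -/
theorem fi_cs (μ : Measure ℝ) (k v : ℝ → ENNReal) (hk : Measurable k) (hv : Measurable v) :
    (∫⁻ s, k s * v s ∂μ) ^ 2 ≤ (∫⁻ s, k s ∂μ) * ∫⁻ s, k s * v s ^ 2 ∂μ := by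
  have h := ENNReal.lintegral_mul_le_Lp_mul_Lq μ Real.HolderConjugate.two_two
    (f := fun s => k s ^ (1/2:ℝ)) (g := fun s => k s ^ (1/2:ℝ) * v s)
    (by fun_prop) (by fun_prop)
  have e0 : ∀ x : ENNReal, x ^ (1/2:ℝ) * x ^ (1/2:ℝ) = x := fun x => by
    rw [← ENNReal.rpow_add_of_nonneg _ _ (by norm_num) (by norm_num)]; norm_num
  have e1 : ∀ x : ENNReal, (x ^ (1/2:ℝ)) ^ (2:ℝ) = x := fun x => by
    rw [← ENNReal.rpow_mul]; norm_num
  have e2 : ∀ x : ENNReal, (x ^ (1/2:ℝ)) ^ (2:ℕ) = x := fun x => by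
    rw [pow_two, e0]
  simp only [Pi.mul_apply, ENNReal.mul_rpow_of_nonneg _ _ (show (0:ℝ) ≤ 2 by norm_num), e1,
    ← mul_assoc, e0, ENNReal.rpow_two] at h
  calc _ ≤ _ := pow_le_pow_left' h 2
    _ = _ := by rw [mul_pow, e2, e2]

theorem fi_point (α T τ : ℝ) (hT : 0 < T)
    (hτ : 0 ≤ τ) (φ : ℝ → ℝ)
    (hφmono : AntitoneOn φ (Icc 0 T))
    (w : ℝ → ℝ) (hw_meas : Measurable w) (t : ℝ) (ht : t ∈ Ioo 0 T) :
    ENNReal.ofReal (Real.exp (2 * τ * φ t) * (fracInt α w t) ^ 2) ≤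
      ENNReal.ofReal ((1 / Real.Gamma (1 - α)) ^ 2) * ((∫⁻ x, fiK α T x) *
       ∫⁻ s, fiK α T (t - s) * (Ioo (0:ℝ) T).indicator
        (fun s => ENNReal.ofReal (Real.exp (2 * τ * φ s) * (w s) ^ 2)) s) := by
  have hKm := fiK_meas α T
  have hKt : Measurable (fun s => fiK α T (t - s)) := hKm.comp (by fun_prop)
  set J := ∫ s in (0:ℝ)..t, (t - s) ^ (-α) * w s with hJ
  have h1 : ‖J‖ₑ ≤ ∫⁻ s in Ioo 0 t, fiK α T (t - s) * ‖w s‖ₑ := by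
    rw [hJ, intervalIntegral.integral_of_le ht.1.le, integral_Ioc_eq_integral_Ioo]
    refine (enorm_integral_le_lintegral_enorm _).trans (le_of_eq ?_)
    refine setLIntegral_congr_fun measurableSet_Ioo fun s hs => ?_
    have : t - s ∈ Ioo 0 T := ⟨by linarith [hs.2], by linarith [hs.1, ht.2]⟩
    simp only [fiK, indicator_of_mem this, enorm_mul]
    rw [Real.enorm_of_nonneg (Real.rpow_nonneg this.1.le _)]
  have h2 : ‖J‖ₑ ^ 2 ≤ (∫⁻ x, fiK α T x) * ∫⁻ s in Ioo 0 t, fiK α T (t - s) * ‖w s‖ₑ ^ 2 := by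
    refine (pow_le_pow_left' h1 2).trans ((fi_cs _ _ _ hKt hw_meas.enorm).trans ?_)
    refine mul_le_mul_left ?_ _
    refine (setLIntegral_le_lintegral _ _).trans (le_of_eq ?_)
    exact lintegral_sub_left_eq_self (fiK α T) t
  have hsq : ∀ x : ℝ, ENNReal.ofReal (x ^ 2) = ‖x‖ₑ ^ 2 := fun x => by
    rw [← sq_abs, ENNReal.ofReal_pow (abs_nonneg _), Real.enorm_eq_ofReal_abs]
  have h3 : ENNReal.ofReal (Real.exp (2 * τ * φ t)) *
      ∫⁻ s in Ioo 0 t, fiK α T (t - s) * ‖w s‖ₑ ^ 2 ≤ 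
      ∫⁻ s, fiK α T (t - s) * (Ioo (0:ℝ) T).indicator
        (fun s => ENNReal.ofReal (Real.exp (2 * τ * φ s) * (w s) ^ 2)) s := by
    rw [← lintegral_const_mul' _ _ ENNReal.ofReal_ne_top]
    refine le_trans ?_ (setLIntegral_le_lintegral (Ioo 0 t) _)
    refine setLIntegral_mono' measurableSet_Ioo fun s hs => ?_
    have hs' : s ∈ Ioo 0 T := ⟨hs.1, hs.2.trans ht.2⟩
    rw [indicator_of_mem hs', ENNReal.ofReal_mul (Real.exp_pos _).le, hsq, mul_left_comm]
    have := hφmono (Ioo_subset_Icc_self hs') (Ioo_subset_Icc_self ht) hs.2.le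
    gcongr
  have : fracInt α w t = (1 / Real.Gamma (1 - α)) * J := rfl
  rw [this, mul_pow, mul_left_comm, ENNReal.ofReal_mul (sq_nonneg _),
    ENNReal.ofReal_mul (Real.exp_pos _).le, hsq J]
  refine mul_le_mul_right ?_ _
  calc _ ≤ _ := mul_le_mul_right h2 _
    _ = _ := mul_left_comm _ _ _
    _ ≤ _ := mul_le_mul_right h3 _

/-- Weighted estimate for the fractional integral with a time-decreasing Carleman weight:
`∫₀^T e^{2τφ} |I_{1-α}w|² ≤ (T^{1-α}/Γ(2-α))² ∫₀^T e^{2τφ} |w|²`. -/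
theorem fracInt_weighted_estimate (α T τ : ℝ) (hα : α ∈ Ioo (0:ℝ) 1) (hT : 0 < T)
    (hτ : 0 ≤ τ) (φ : ℝ → ℝ) (hφcont : ContinuousOn φ (Icc 0 T))
    (hφmono : AntitoneOn φ (Icc 0 T))
    (w : ℝ → ℝ) (hw_meas : Measurable w)
    (hw : IntegrableOn (fun t => Real.exp (2 * τ * φ t) * (w t) ^ 2) (Ioo 0 T)) :
    ∫ t in Ioo (0:ℝ) T, Real.exp (2 * τ * φ t) * (fracInt α w t) ^ 2 ≤
      (T ^ (1 - α) / Real.Gamma (2 - α)) ^ 2 *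
        ∫ t in Ioo (0:ℝ) T, Real.exp (2 * τ * φ t) * (w t) ^ 2 := by
  have hR : 0 ≤ (T ^ (1 - α) / Real.Gamma (2 - α)) ^ 2 *
        ∫ t in Ioo (0:ℝ) T, Real.exp (2 * τ * φ t) * (w t) ^ 2 :=
    mul_nonneg (sq_nonneg _) (integral_nonneg fun t => by positivity)
  by_cases hi : IntegrableOn (fun t => Real.exp (2 * τ * φ t) * (fracInt α w t) ^ 2) (Ioo 0 T)
  swap
  · rw [integral_undef hi]; exact hR
  rw [← ENNReal.ofReal_le_ofReal_iff hR, ENNReal.ofReal_mul (sq_nonneg _),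
    ofReal_integral_eq_lintegral_ofReal hi (ae_of_all _ fun t => by positivity),
    ofReal_integral_eq_lintegral_ofReal hw (ae_of_all _ fun t => by positivity)]
  set F : ℝ → ENNReal := (Ioo (0:ℝ) T).indicator
        (fun s => ENNReal.ofReal (Real.exp (2 * τ * φ s) * (w s) ^ 2)) with hF
  have hFm : AEMeasurable F := by
    rw [hF, aemeasurable_indicator_iff measurableSet_Ioo]
    exact hw.aestronglyMeasurable.aemeasurable.ennreal_ofReal
  have hFi : ∫⁻ s, F s = ∫⁻ t in Ioo (0:ℝ) T, ENNReal.ofReal (Real.exp (2 * τ * φ t) * (w t) ^ 2) :=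
    lintegral_indicator measurableSet_Ioo _
  rw [← hFi]
  set M := ∫⁻ x, fiK α T x with hM
  have hMv : M = ENNReal.ofReal (T ^ (1 - α) / (1 - α)) := fiK_int α T hα hT
  have hMt : M ≠ ⊤ := by rw [hMv]; exact ENNReal.ofReal_ne_top
  have hKm := fiK_meas α T
  have hK2 : Measurable (fun p : ℝ × ℝ => fiK α T (p.1 - p.2)) := hKm.comp (by fun_prop)
  have hsw : ∫⁻ t, ∫⁻ s, fiK α T (t - s) * F s = M * ∫⁻ s, F s := by
    rw [lintegral_lintegral_swap]
    · rw [← lintegral_const_mul' _ _ hMt]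
      refine lintegral_congr fun s => ?_
      have hm : Measurable (fun t : ℝ => fiK α T (t - s)) := hKm.comp (by fun_prop)
      rw [lintegral_mul_const _ hm]
      rw [lintegral_sub_right_eq_self (fiK α T) s]
    · exact hK2.aemeasurable.mul (hFm.comp_quasiMeasurePreserving Measure.quasiMeasurePreserving_snd)
  have hα1 : 0 < 1 - α := by linarith [hα.2]
  have hG : Real.Gamma (2 - α) = (1 - α) * Real.Gamma (1 - α) := by
    rw [← Real.Gamma_add_one hα1.ne']; congr 1; ring
  calc _ ≤ ∫⁻ t in Ioo 0 T, ENNReal.ofReal ((1 / Real.Gamma (1 - α)) ^ 2) * (M *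
              ∫⁻ s, fiK α T (t - s) * F s) :=
        setLIntegral_mono' measurableSet_Ioo fun t ht =>
          fi_point α T τ hT hτ φ hφmono w hw_meas t ht
    _ ≤ ∫⁻ t, ENNReal.ofReal ((1 / Real.Gamma (1 - α)) ^ 2) * (M *
              ∫⁻ s, fiK α T (t - s) * F s) := setLIntegral_le_lintegral _ _
    _ = ENNReal.ofReal ((1 / Real.Gamma (1 - α)) ^ 2) * (M * (M * ∫⁻ s, F s)) := by
        rw [lintegral_const_mul' _ _ ENNReal.ofReal_ne_top, lintegral_const_mul' _ _ hMt, hsw]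
    _ = _ := by
        rw [← mul_assoc, ← mul_assoc, hMv, ← ENNReal.ofReal_mul (sq_nonneg _),
          ← ENNReal.ofReal_mul (by positivity), hG]
        congr 2
        have := (Real.Gamma_pos_of_pos hα1).ne'
        field_simp
end
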